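/- Let n ≥ 2 and let (i_1,…,i_N), N = n(n−1)/2, be a reduced word for the longest element w_0 of S_n, with greedy indices t_1 < ⋯ < t_{n−1} for the pattern (1,2,…,n−1) (t_1 minimal with i_{t_1} = 1; t_k minimal with t_k > t_{k−1} and i_{t_k} = k). Set w^{(t)} := s_{i_t} ∘ ⋯ ∘ s_{i_1} and define j_k := (w^{(t_k − 1)})^{-1}(k+1) for 1 ≤ k ≤ n−1, i.e. j_k is the label of the wire crossing wire ℓ_1 at the greedy crossing t_k. Then j_1, …, j_{n−1} are pairwise distinct and {j_1, …, j_{n−1}} = {2, 3, …, n}. -/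

import Mathlib

/-!
Crossing the wires at levels `j`, `j + 1` creates at most one inversion, namely the pair of crossing
wires.  A word as long as the number of inversions of its product therefore crosses each inverted
pair exactly once and no other pair, so the lower wire of a crossing always has the smaller label.
Hence wire `1` never moves down; it waits at level `k` until the letter `k` occurs, which is the
`k`-th greedy crossing.  Its partners there are distinct because crossing pairs do not repeat, and
`n - 1` distinct labels in `{2, …, n}` are all of them.
-/

/-- The adjacent transposition `s_j` swapping `j` and `j+1` (acting on `ℕ`,
restricting to the usual generator of the symmetric group on `{1, …, n}`). -/
def adjSwap (j : ℕ) : Equiv.Perm ℕ := Equiv.swap j (j + 1)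

/-- The wiring diagram of the word `i 1, i 2, …`: the wire starting at level `p` occupies level
`wiring i m p` after `m` crossings. The value `i 0` is never used. -/
def wiring (i : ℕ → ℕ) : ℕ → Equiv.Perm ℕ
  | 0 => 1
  | m + 1 => adjSwap (i (m + 1)) * wiring i m

/-- The labels of the two wires meeting at crossing `r ≥ 1`, lower level first. -/
def crossing (i : ℕ → ℕ) (r : ℕ) : ℕ × ℕ :=
  ((wiring i (r - 1))⁻¹ (i r), (wiring i (r - 1))⁻¹ (i r + 1))

/-- The inversions of `w`, as pairs of positions `p.1 < p.2` whose values are in the wrong order. -/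
def inversions {α : Type*} [LT α] (w : Equiv.Perm α) : Set (α × α) :=
  {p | p.1 < p.2 ∧ w p.2 < w p.1}

/-- The word `i 1, …, i N` is reduced: its length is the number of inversions of its product, which
is the Coxeter length. -/
def IsReducedWord (i : ℕ → ℕ) (N : ℕ) : Prop :=
  (inversions (wiring i N)).ncard = N

/-- `t 1 < ⋯ < t d` are the greedy indices for the pattern `(1, …, d)` in the word `i 1, …, i N`:
each `t k` is the first position after `t (k - 1)` carrying the letter `k`. The value `t 0` is
unconstrained, so the first index has its own minimality condition. -/
structure IsGreedyIndices (i : ℕ → ℕ) (N d : ℕ) (t : ℕ → ℕ) : Prop where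
  mem_Icc : ∀ k ∈ Finset.Icc 1 d, t k ∈ Finset.Icc 1 N
  letter_eq : ∀ k ∈ Finset.Icc 1 d, i (t k) = k
  lt_succ : ∀ k, 1 ≤ k → k + 1 ≤ d → t k < t (k + 1)
  ne_one_of_lt : ∀ r ∈ Finset.Icc 1 N, r < t 1 → i r ≠ 1
  ne_of_lt_of_lt : ∀ k, 2 ≤ k → k ≤ d →
    ∀ r ∈ Finset.Icc 1 N, t (k - 1) < r → r < t k → i r ≠ k

section Wiring

theorem adjSwap_inv (j : ℕ) : (adjSwap j)⁻¹ = adjSwap j :=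
  Equiv.swap_inv j (j + 1)

variable {i : ℕ → ℕ}

theorem eq_wiring {W : ℕ → Equiv.Perm ℕ} (hW0 : W 0 = 1)
    (hWs : ∀ m, W (m + 1) = adjSwap (i (m + 1)) * W m) : W = wiring i := by
  funext m
  induction m with
  | zero => exact hW0
  | succ m ih => rw [hWs, ih, wiring]

theorem prod_adjSwap_eq_inv_wiring (i : ℕ → ℕ) (m : ℕ) :
    ((List.range m).map fun r => adjSwap (i (r + 1))).prod = (wiring i m)⁻¹ := by
  induction m with
  | zero => simp [wiring]
  | succ m ih => simp [List.range_succ, ih, wiring, adjSwap_inv]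

theorem wiring_succ_apply_of_ne {m q : ℕ} (hlower : wiring i m q ≠ i (m + 1))
    (hupper : wiring i m q ≠ i (m + 1) + 1) : wiring i (m + 1) q = wiring i m q :=
  Equiv.swap_apply_of_ne_of_ne hlower hupper

theorem wiring_apply_eq_self {m q : ℕ} (h : ∀ r ∈ Finset.Icc 1 m, q ≠ i r ∧ q ≠ i r + 1) :
    wiring i m q = q := by
  induction m with
  | zero => rfl
  | succ m ih =>
    have hm : wiring i m q = q :=
      ih fun r hr => h r (Finset.Icc_subset_Icc_right m.le_succ hr)
    obtain ⟨hlower, hupper⟩ := h (m + 1) (by simp)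
    rw [wiring_succ_apply_of_ne (by rwa [hm]) (by rwa [hm]), hm]

theorem inv_wiring_apply_le {m n q : ℕ} (h : ∀ r ∈ Finset.Icc 1 m, i r < n) (hq : q ≤ n) :
    (wiring i m)⁻¹ q ≤ n := by
  by_contra! hgt
  have hfix : wiring i m ((wiring i m)⁻¹ q) = (wiring i m)⁻¹ q :=
    wiring_apply_eq_self fun r hr => by have hletter := h r hr; omega
  rw [← Equiv.Perm.mul_apply, mul_inv_cancel, Equiv.Perm.one_apply] at hfix
  exact absurd hgt (hfix ▸ hq).not_gt

end Wiring

section Inversions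

theorem eq_and_eq_of_adjSwap_lt {j a b : ℕ} (hab : a < b) (h : adjSwap j b < adjSwap j a) :
    a = j ∧ b = j + 1 := by
  simp only [adjSwap, Equiv.swap_apply_def] at h
  split_ifs at h <;> omega

theorem inversions_adjSwap_mul_subset (j : ℕ) (w : Equiv.Perm ℕ) :
    inversions (adjSwap j * w) ⊆ insert (w⁻¹ j, w⁻¹ (j + 1)) (inversions w) := by
  rintro ⟨p, q⟩ ⟨hpq : p < q, hinv⟩
  obtain hlt | hgt := (w.injective.ne hpq.ne).lt_or_gt
  · obtain ⟨hp, hq⟩ := eq_and_eq_of_adjSwap_lt hlt hinv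
    left
    exact Prod.ext (Equiv.Perm.eq_inv_iff_eq.2 hp) (Equiv.Perm.eq_inv_iff_eq.2 hq)
  · exact Or.inr ⟨hpq, hgt⟩

theorem choose_two_le_ncard_inversions {α : Type*} [LinearOrder α] {w : Equiv.Perm α}
    {s : Finset α} (hw : StrictAntiOn w s) (hfin : (inversions w).Finite) :
    s.card.choose 2 ≤ (inversions w).ncard := by
  have hcover : (s.offDiag.image Sym2.mk.uncurry : Set (Sym2 α)) ⊆
      Sym2.mk.uncurry '' inversions w := by
    intro e he
    obtain ⟨⟨p, q⟩, hpq, rfl⟩ := Finset.mem_image.1 (Finset.mem_coe.1 he)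
    obtain ⟨hp, hq, hne⟩ := Finset.mem_offDiag.1 hpq
    obtain hlt | hgt := hne.lt_or_gt
    · exact ⟨(p, q), ⟨hlt, hw hp hq hlt⟩, rfl⟩
    · exact ⟨(q, p), ⟨hgt, hw hq hp hgt⟩, Sym2.eq_swap⟩
  calc s.card.choose 2 = (s.offDiag.image Sym2.mk.uncurry : Set (Sym2 α)).ncard := by
        rw [Set.ncard_coe_finset, Sym2.card_image_offDiag]
    _ ≤ (Sym2.mk.uncurry '' inversions w).ncard := Set.ncard_le_ncard hcover (hfin.image _)
    _ ≤ (inversions w).ncard := Set.ncard_image_le hfin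

variable (i : ℕ → ℕ) (N : ℕ)

theorem inversions_wiring_subset_image_crossing :
    inversions (wiring i N) ⊆ crossing i '' Set.Icc 1 N := by
  induction N with
  | zero =>
    rintro p ⟨hlt, hgt⟩
    exact absurd hgt hlt.asymm
  | succ N ih =>
    refine (inversions_adjSwap_mul_subset _ _).trans (Set.insert_subset ?_ (ih.trans ?_))
    · exact ⟨N + 1, by simp, rfl⟩
    · exact Set.image_mono (Set.Icc_subset_Icc_right N.le_succ)

theorem finite_inversions_wiring : (inversions (wiring i N)).Finite :=
  ((Set.finite_Icc 1 N).image _).subset (inversions_wiring_subset_image_crossing i N)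

theorem ncard_image_crossing_le : (crossing i '' Set.Icc 1 N).ncard ≤ N := by
  simpa using Set.ncard_image_le (f := crossing i) (Set.finite_Icc 1 N)

theorem ncard_inversions_wiring_le : (inversions (wiring i N)).ncard ≤ N :=
  (Set.ncard_le_ncard (inversions_wiring_subset_image_crossing i N)
    ((Set.finite_Icc 1 N).image _)).trans (ncard_image_crossing_le i N)

end Inversions

section ReducedWord

variable {i : ℕ → ℕ} {N : ℕ}

theorem isReducedWord_of_strictAntiOn {s : Finset ℕ} (hw : StrictAntiOn (wiring i N) s)
    (hN : N = s.card.choose 2) : IsReducedWord i N :=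
  (ncard_inversions_wiring_le i N).antisymm
    (hN.trans_le (choose_two_le_ncard_inversions hw (finite_inversions_wiring i N)))

theorem isReducedWord_of_prod_eq_longest {n : ℕ} (hN : N = n * (n - 1) / 2)
    (hword : ∀ j ∈ Finset.Icc 1 n,
      (((List.range N).map fun r => adjSwap (i (r + 1))).prod : Equiv.Perm ℕ) j = n + 1 - j) :
    IsReducedWord i N := by
  have hrev : ∀ p ∈ Finset.Icc 1 n, wiring i N p = n + 1 - p := by
    intro p hp
    obtain ⟨hp1, hpn⟩ := Finset.mem_Icc.1 hp
    have hinv := hword (n + 1 - p) (Finset.mem_Icc.2 ⟨by omega, by omega⟩)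
    rw [prod_adjSwap_eq_inv_wiring, Equiv.Perm.inv_eq_iff_eq,
      Nat.sub_sub_self (by omega : p ≤ n + 1)] at hinv
    exact hinv.symm
  refine isReducedWord_of_strictAntiOn (s := Finset.Icc 1 n) ?_ ?_
  · intro p hp q hq hpq
    rw [hrev p hp, hrev q hq]
    have hqn := (Finset.mem_Icc.1 hq).2
    omega
  · rw [hN, Nat.card_Icc, Nat.add_sub_cancel, Nat.choose_two_right]

namespace IsReducedWord

theorem bijOn_crossing (h : IsReducedWord i N) :
    Set.BijOn (crossing i) (Set.Icc 1 N) (inversions (wiring i N)) := by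
  have himage : inversions (wiring i N) = crossing i '' Set.Icc 1 N :=
    Set.eq_of_subset_of_ncard_le (inversions_wiring_subset_image_crossing i N)
      ((ncard_image_crossing_le i N).trans_eq h.symm) ((Set.finite_Icc 1 N).image _)
  have hinj : Set.InjOn (crossing i) (Set.Icc 1 N) :=
    Set.injOn_of_ncard_image_eq (by rw [← himage, h]; simp) (Set.finite_Icc 1 N)
  exact himage ▸ hinj.bijOn_image

theorem crossing_fst_lt_snd (h : IsReducedWord i N) {r : ℕ} (hr : r ∈ Set.Icc 1 N) :
    (crossing i r).1 < (crossing i r).2 :=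
  (h.bijOn_crossing.mapsTo hr).1

theorem crossing_snd_ne_one (h : IsReducedWord i N) (hi : ∀ r ∈ Finset.Icc 1 N, 1 ≤ i r)
    {r : ℕ} (hr : r ∈ Set.Icc 1 N) : (crossing i r).2 ≠ 1 := by
  intro hone
  have hzero : (wiring i (r - 1))⁻¹ (i r) = 0 :=
    Nat.lt_one_iff.1 ((h.crossing_fst_lt_snd hr).trans_eq hone)
  have hfix : wiring i (r - 1) 0 = 0 := by
    refine wiring_apply_eq_self fun r' hr' => ?_
    have hpos := hi r' (Finset.Icc_subset_Icc_right ((Nat.sub_le r 1).trans hr.2) hr')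
    omega
  have hletter : i r = 0 := by rw [Equiv.Perm.inv_eq_iff_eq.1 hzero, hfix]
  exact (Nat.one_le_iff_ne_zero.1 (hi r (Finset.mem_Icc.2 hr))) hletter

theorem wiring_apply_one_eq_of_forall_ne (h : IsReducedWord i N)
    (hi : ∀ r ∈ Finset.Icc 1 N, 1 ≤ i r) {a b k : ℕ} (hab : a ≤ b) (hbN : b ≤ N)
    (ha : wiring i a 1 = k) (hne : ∀ r ∈ Set.Ioc a b, i r ≠ k) : wiring i b 1 = k := by
  induction b, hab using Nat.le_induction with
  | base => exact ha
  | succ b hab ih =>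
    have hb : wiring i b 1 = k :=
      ih (by omega) fun r hr => hne r (Set.Ioc_subset_Ioc_right b.le_succ hr)
    have hlower : wiring i b 1 ≠ i (b + 1) := by
      rw [hb]
      exact (hne (b + 1) ⟨by omega, le_rfl⟩).symm
    have hupper : wiring i b 1 ≠ i (b + 1) + 1 := fun heq =>
      h.crossing_snd_ne_one hi (r := b + 1) ⟨by omega, hbN⟩ (Equiv.Perm.inv_eq_iff_eq.2 heq.symm)
    rw [wiring_succ_apply_of_ne hlower hupper, hb]

end IsReducedWord

end ReducedWord

section Greedy

variable {i t : ℕ → ℕ} {N d : ℕ}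

theorem IsGreedyIndices.wiring_pred_apply_one (ht : IsGreedyIndices i N d t)
    (hred : IsReducedWord i N) (hi : ∀ r ∈ Finset.Icc 1 N, 1 ≤ i r) {k : ℕ}
    (hk1 : 1 ≤ k) (hkd : k ≤ d) : wiring i (t k - 1) 1 = k := by
  induction k, hk1 using Nat.le_induction with
  | base =>
    obtain ⟨ht1, htN⟩ := Finset.mem_Icc.1 (ht.mem_Icc 1 (by simpa))
    refine hred.wiring_apply_one_eq_of_forall_ne hi (Nat.zero_le _) (by omega) rfl ?_
    rintro r ⟨hr0, hrt⟩
    exact ht.ne_one_of_lt r (Finset.mem_Icc.2 ⟨hr0, by omega⟩) (by omega)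
  | succ k hk1 ih =>
    have hk : k ∈ Finset.Icc 1 d := Finset.mem_Icc.2 ⟨hk1, by omega⟩
    obtain ⟨htk1, -⟩ := Finset.mem_Icc.1 (ht.mem_Icc k hk)
    obtain ⟨-, htN⟩ := Finset.mem_Icc.1 (ht.mem_Icc (k + 1) (by simpa))
    have hlt : t k < t (k + 1) := ht.lt_succ k hk1 hkd
    have hcross : wiring i (t k) 1 = k + 1 := by
      rw [← Nat.sub_add_cancel htk1, wiring, Nat.sub_add_cancel htk1, ht.letter_eq k hk,
        Equiv.Perm.mul_apply, ih (by omega), adjSwap, Equiv.swap_apply_left]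
    refine hred.wiring_apply_one_eq_of_forall_ne hi (by omega) (by omega) hcross ?_
    rintro r ⟨hrt, hrt'⟩
    exact ht.ne_of_lt_of_lt (k + 1) (by omega) hkd r (Finset.mem_Icc.2 ⟨by omega, by omega⟩)
      (by simpa using hrt) (by omega)

theorem IsGreedyIndices.crossing_eq (ht : IsGreedyIndices i N d t)
    (hred : IsReducedWord i N) (hi : ∀ r ∈ Finset.Icc 1 N, 1 ≤ i r) {k : ℕ}
    (hk : k ∈ Finset.Icc 1 d) :
    crossing i (t k) = (1, (wiring i (t k - 1))⁻¹ (k + 1)) := by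
  obtain ⟨hk1, hkd⟩ := Finset.mem_Icc.1 hk
  have hone : (wiring i (t k - 1))⁻¹ k = 1 :=
    Equiv.Perm.inv_eq_iff_eq.2 (ht.wiring_pred_apply_one hred hi hk1 hkd).symm
  rw [crossing, ht.letter_eq k hk, hone]

end Greedy

theorem greedy_crossing_partners_wire_one_general {n N : ℕ} {i t : ℕ → ℕ}
    (hi : ∀ r ∈ Finset.Icc 1 N, 1 ≤ i r ∧ i r ≤ n - 1) (hred : IsReducedWord i N)
    (ht : IsGreedyIndices i N (n - 1) t) :
    Set.BijOn (fun k => (wiring i (t k - 1))⁻¹ (k + 1)) (Set.Icc 1 (n - 1)) (Set.Icc 2 n) := by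
  have hpair {k : ℕ} (hk : k ∈ Set.Icc 1 (n - 1)) :
      crossing i (t k) = (1, (wiring i (t k - 1))⁻¹ (k + 1)) :=
    ht.crossing_eq hred (fun r hr => (hi r hr).1) (Finset.mem_Icc.2 hk)
  have htN {k : ℕ} (hk : k ∈ Set.Icc 1 (n - 1)) : t k ∈ Set.Icc 1 N :=
    Finset.mem_Icc.1 (ht.mem_Icc k (Finset.mem_Icc.2 hk))
  have hinj : Set.InjOn (fun k => (wiring i (t k - 1))⁻¹ (k + 1)) (Set.Icc 1 (n - 1)) := by
    intro k hk l hl hkl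
    have htime : t k = t l := hred.bijOn_crossing.injOn (htN hk) (htN hl)
      ((hpair hk).trans ((congrArg (Prod.mk 1) hkl).trans (hpair hl).symm))
    rw [← ht.letter_eq k (Finset.mem_Icc.2 hk), htime, ht.letter_eq l (Finset.mem_Icc.2 hl)]
  have hmaps : Set.MapsTo (fun k => (wiring i (t k - 1))⁻¹ (k + 1)) (Set.Icc 1 (n - 1))
      (Set.Icc 2 n) := by
    intro k hk
    have hlt := hred.crossing_fst_lt_snd (htN hk)
    rw [hpair hk] at hlt
    have ⟨hk1, hkn⟩ := hk
    refine ⟨hlt, inv_wiring_apply_le (fun r hr => ?_) (by omega)⟩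
    have hletter := hi r (Finset.Icc_subset_Icc_right ((Nat.sub_le _ 1).trans (htN hk).2) hr)
    omega
  refine ⟨hmaps, hinj, (Set.eq_of_subset_of_ncard_le hmaps.image_subset ?_).ge⟩
  rw [hinj.ncard_image]
  simp

/-- for a reduced word `(i 1, …, i N)`, `N = n(n-1)/2`, of the longest
element `w₀` of `Sₙ`, with greedy indices `t 1 < ⋯ < t (n-1)` for the pattern
`(1, 2, …, n-1)`, setting `W m = s_{i m} ∘ ⋯ ∘ s_{i 1}` and
`j_k = (W (t k - 1))⁻¹ (k + 1)` (the label of the wire crossing wire `ℓ₁` at the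
greedy crossing `t k`), the `j_k` are pairwise distinct and
`{j_1, …, j_{n-1}} = {2, 3, …, n}`. -/
theorem greedy_crossing_partners_wire_one
    (n N : ℕ) (hn : 2 ≤ n) (hN : N = n * (n - 1) / 2)
    (i : ℕ → ℕ) (hi : ∀ t ∈ Finset.Icc 1 N, 1 ≤ i t ∧ i t ≤ n - 1)
    (hword : ∀ j ∈ Finset.Icc 1 n,
      (((List.range N).map fun t => adjSwap (i (t + 1))).prod : Equiv.Perm ℕ) j
        = n + 1 - j)
    (t : ℕ → ℕ)
    (ht_range : ∀ k ∈ Finset.Icc 1 (n - 1), t k ∈ Finset.Icc 1 N)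
    (ht_letter : ∀ k ∈ Finset.Icc 1 (n - 1), i (t k) = k)
    (ht_mono : ∀ k, 1 ≤ k → k + 1 ≤ n - 1 → t k < t (k + 1))
    (ht_min1 : ∀ r ∈ Finset.Icc 1 N, r < t 1 → i r ≠ 1)
    (ht_min : ∀ k, 2 ≤ k → k ≤ n - 1 →
      ∀ r ∈ Finset.Icc 1 N, t (k - 1) < r → r < t k → i r ≠ k)
    (W : ℕ → Equiv.Perm ℕ) (hW0 : W 0 = 1)
    (hWs : ∀ m, W (m + 1) = adjSwap (i (m + 1)) * W m) :
    Set.InjOn (fun k => ((W (t k - 1))⁻¹ : Equiv.Perm ℕ) (k + 1)) (Set.Icc 1 (n - 1)) ∧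
    (fun k => ((W (t k - 1))⁻¹ : Equiv.Perm ℕ) (k + 1)) '' Set.Icc 1 (n - 1)
      = Set.Icc 2 n := by
  obtain rfl : W = wiring i := eq_wiring hW0 hWs
  have hbij := greedy_crossing_partners_wire_one_general hi
    (isReducedWord_of_prod_eq_longest hN hword)
    ⟨ht_range, ht_letter, ht_mono, ht_min1, ht_min⟩
  exact ⟨hbij.injOn, hbij.image_eq⟩
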